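/- Chebyshev-type bound for character sums over square-free polynomials: let h, l be positive integers with 2hl ≤ 2g+1, and let a(P) be arbitrary complex numbers indexed by monic irreducible polynomials P of degree ≤ h. Then Σ_{D ∈ H*_{2g+1}} | Σ_{deg P ≤ h} χ_D(P) a(P)/|P|^{1/2} |^{2l} ≪ q^{2g} · (2l)!/(l! 2^l) · ( Σ_{deg P ≤ h} |a(P)|²/|P| )^l. -/

import Mathlib

open Polynomial UniqueFactorizationMonoid

open Classical in
/-- Quadratic residue symbol `(f/P)` for `P` a monic irreducible polynomial:
`0` if `P ∣ f`, `1` if `f` is a nonzero square mod `P`, `-1` otherwise. -/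
noncomputable def legSym {F : Type*} [Field F] (P f : Polynomial F) : ℤ :=
  if P ∣ f then 0 else if ∃ g, P ∣ (g * g - f) then 1 else -1

/-- The quadratic character `χ_m(a) = (a/m)`, extended multiplicatively over the
irreducible factors of the modulus `m`. -/
noncomputable def jacSym {F : Type*} [Field F] (a m : Polynomial F) : ℤ :=
  ((factors m).map (fun P => legSym P a)).prod

/-!
Expand the `2l`-th power by the multinomial theorem into mixed moments `∑_D ∏ (D/P) ^ k P`. If some
`k P` is odd and the modulus `M = ∏ P ^ k P` has degree at most `n`, the Chinese remainder theorem
gives `u` coprime to `M` with `∏ (u/P) ^ k P = -1`; multiplication by `u` modulo `M` can be realised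
as a permutation of the monic polynomials of degree `n`, so the sum of `∏ (D/P) ^ k P` over them
equals its own negative. The exponents that survive are `k = 2j`, and there `(2l)! / ∏ (2 j P)!` is
at most `(2l)! / (l! 2 ^ l)` times `l! / ∏ (j P)!`, which resums to `(∑ |b P| ^ 2) ^ l` by the
multinomial theorem. Minkowski's inequality in `L^l`, applied to
`|z| ^ 2 = (re z) ^ 2 + (im z) ^ 2`, passes from real to complex coefficients without losing a
constant. By positivity the square-free `D` coprime to `Δ` are majorised by all monic `D`.
-/

open Finset

section EvenMoments

variable {ι X : Type*}

lemma multinomial_two_mul_le (s : Finset ι) (k : ι → ℕ) :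
    (Nat.multinomial s fun i => 2 * k i : ℝ) ≤
      (2 * ∑ i ∈ s, k i).factorial / ((∑ i ∈ s, k i).factorial * 2 ^ ∑ i ∈ s, k i) *
        Nat.multinomial s k := by
  have spec_k := Nat.multinomial_spec s k
  have spec_two_mul := Nat.multinomial_spec s fun i => 2 * k i
  rw [← mul_sum] at spec_two_mul
  have factorial_le : ∏ i ∈ s, 2 ^ k i * (k i).factorial ≤ ∏ i ∈ s, (2 * k i).factorial :=
    prod_le_prod' fun i _ => Nat.two_pow_mul_factorial_le_factorial_two_mul (k i)
  rw [prod_mul_distrib, prod_pow_eq_pow_sum] at factorial_le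
  rw [div_mul_eq_mul_div, le_div_iff₀ (by positivity)]
  norm_cast
  rw [← spec_k, ← spec_two_mul]
  calc _ = (2 ^ (∑ i ∈ s, k i) * ∏ i ∈ s, (k i).factorial) *
        ((Nat.multinomial s fun i => 2 * k i) * Nat.multinomial s k) := by ring
    _ ≤ (∏ i ∈ s, (2 * k i).factorial) *
        ((Nat.multinomial s fun i => 2 * k i) * Nat.multinomial s k) := by gcongr
    _ = _ := by ring

variable [DecidableEq ι]

lemma sum_even_piAntidiag_le (s : Finset ι) (l : ℕ) (b : ι → ℝ) :
    ∑ k ∈ s.piAntidiag (2 * l) with ∀ i ∈ s, 2 ∣ k i, Nat.multinomial s k * ∏ i ∈ s, b i ^ k i ≤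
      (2 * l).factorial / (l.factorial * 2 ^ l) * (∑ i ∈ s, b i ^ 2) ^ l := by
  rw [← map_nsmul_piAntidiag s l two_ne_zero, sum_map, sum_pow_eq_sum_piAntidiag, mul_sum]
  refine sum_le_sum fun k hk => ?_
  have bound := multinomial_two_mul_le s k
  rw [(mem_piAntidiag.1 hk).1] at bound
  simp only [Function.Embedding.coeFn_mk, Pi.smul_def, smul_eq_mul, pow_mul]
  rw [← mul_assoc]
  gcongr

lemma sum_pow_two_mul_le_of_odd_moments_eq_zero {𝒟 : Finset X} {s : Finset ι} {x : X → ι → ℝ}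
    (hx : ∀ D ∈ 𝒟, ∀ i ∈ s, |x D i| ≤ 1) {l : ℕ}
    (hodd : ∀ k ∈ s.piAntidiag (2 * l), (∃ i ∈ s, Odd (k i)) →
      ∑ D ∈ 𝒟, ∏ i ∈ s, x D i ^ k i = 0) (b : ι → ℝ) :
    ∑ D ∈ 𝒟, (∑ i ∈ s, x D i * b i) ^ (2 * l) ≤
      #𝒟 * ((2 * l).factorial / (l.factorial * 2 ^ l)) * (∑ i ∈ s, b i ^ 2) ^ l := by
  have mixed_moment_le (k : ι → ℕ) : ∑ D ∈ 𝒟, ∏ i ∈ s, x D i ^ k i ≤ #𝒟 := by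
    refine (sum_le_card_nsmul 𝒟 _ 1 fun D hD => (le_abs_self _).trans ?_).trans_eq (by simp)
    simp only [abs_prod, abs_pow]
    exact prod_le_one (fun _ _ => by positivity) fun i hi =>
      pow_le_one₀ (abs_nonneg _) (hx D hD i hi)
  calc ∑ D ∈ 𝒟, (∑ i ∈ s, x D i * b i) ^ (2 * l)
      = ∑ k ∈ s.piAntidiag (2 * l),
          Nat.multinomial s k * (∏ i ∈ s, b i ^ k i) * ∑ D ∈ 𝒟, ∏ i ∈ s, x D i ^ k i := by
        simp only [sum_pow_eq_sum_piAntidiag, mul_pow, prod_mul_distrib]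
        rw [sum_comm]
        refine sum_congr rfl fun k _ => ?_
        rw [mul_sum]
        exact sum_congr rfl fun D _ => by ring
    _ = ∑ k ∈ s.piAntidiag (2 * l) with ∀ i ∈ s, 2 ∣ k i,
          Nat.multinomial s k * (∏ i ∈ s, b i ^ k i) * ∑ D ∈ 𝒟, ∏ i ∈ s, x D i ^ k i := by
        refine (sum_filter_of_ne fun k hk hne i hi => ?_).symm
        by_contra h
        have odd_k : Odd (k i) := Nat.not_even_iff_odd.1 fun even_k => h even_k.two_dvd
        exact hne (by rw [hodd k hk ⟨i, hi, odd_k⟩, mul_zero])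
    _ ≤ ∑ k ∈ s.piAntidiag (2 * l) with ∀ i ∈ s, 2 ∣ k i,
          Nat.multinomial s k * (∏ i ∈ s, b i ^ k i) * #𝒟 := by
        refine sum_le_sum fun k hk => ?_
        have prod_nonneg : 0 ≤ ∏ i ∈ s, b i ^ k i := Finset.prod_nonneg fun i hi =>
          (even_iff_two_dvd.2 ((mem_filter.1 hk).2 i hi)).pow_nonneg (b i)
        gcongr
        exact mixed_moment_le k
    _ ≤ #𝒟 * ((2 * l).factorial / (l.factorial * 2 ^ l)) * (∑ i ∈ s, b i ^ 2) ^ l := by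
        rw [← sum_mul, mul_comm, mul_assoc]
        gcongr
        exact sum_even_piAntidiag_le s l b

lemma sum_add_pow_le_of_sum_pow_le {𝒟 : Finset X} {u v : X → ℝ} (hu : ∀ D ∈ 𝒟, 0 ≤ u D)
    (hv : ∀ D ∈ 𝒟, 0 ≤ v D) {l : ℕ} {C α β : ℝ} (hC : 0 ≤ C) (hα : 0 ≤ α) (hβ : 0 ≤ β)
    (hsu : ∑ D ∈ 𝒟, u D ^ l ≤ C * α ^ l) (hsv : ∑ D ∈ 𝒟, v D ^ l ≤ C * β ^ l) :
    ∑ D ∈ 𝒟, (u D + v D) ^ l ≤ C * (α + β) ^ l := by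
  rcases Nat.eq_zero_or_pos l with rfl | hl
  · simpa using hsu
  have root_le {w : X → ℝ} {γ : ℝ} (hγ : 0 ≤ γ) (hw : ∀ D ∈ 𝒟, 0 ≤ w D)
      (hsw : ∑ D ∈ 𝒟, w D ^ l ≤ C * γ ^ l) :
      (∑ D ∈ 𝒟, w D ^ (l : ℝ)) ^ (1 / (l : ℝ)) ≤ C ^ (1 / (l : ℝ)) * γ := by
    simp only [Real.rpow_natCast]
    calc _ ≤ (C * γ ^ l) ^ (1 / (l : ℝ)) := by
          have := sum_nonneg fun D hD => pow_nonneg (hw D hD) l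
          gcongr
      _ = C ^ (1 / (l : ℝ)) * γ := by
          rw [Real.mul_rpow hC (by positivity), one_div, Real.pow_rpow_inv_natCast hγ hl.ne']
  have minkowski := (Real.Lp_add_le_of_nonneg 𝒟 (Nat.one_le_cast.2 hl) hu hv).trans
    (add_le_add (root_le hα hu hsu) (root_le hβ hv hsv))
  simp only [Real.rpow_natCast] at minkowski
  rw [← mul_add, one_div, Real.rpow_inv_le_iff_of_pos
    (sum_nonneg fun D hD => pow_nonneg (add_nonneg (hu D hD) (hv D hD)) l) (by positivity)
    (by positivity), Real.rpow_natCast, mul_pow, Real.rpow_inv_natCast_pow hC hl.ne'] at minkowski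
  exact minkowski

lemma sum_norm_pow_two_mul_le_of_odd_moments_eq_zero {𝒟 : Finset X} {s : Finset ι}
    {x : X → ι → ℝ} (hx : ∀ D ∈ 𝒟, ∀ i ∈ s, |x D i| ≤ 1) {l : ℕ}
    (hodd : ∀ k ∈ s.piAntidiag (2 * l), (∃ i ∈ s, Odd (k i)) →
      ∑ D ∈ 𝒟, ∏ i ∈ s, x D i ^ k i = 0) (b : ι → ℂ) :
    ∑ D ∈ 𝒟, ‖∑ i ∈ s, (x D i : ℂ) * b i‖ ^ (2 * l) ≤
      #𝒟 * ((2 * l).factorial / (l.factorial * 2 ^ l)) * (∑ i ∈ s, ‖b i‖ ^ 2) ^ l := by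
  have re_bound := sum_pow_two_mul_le_of_odd_moments_eq_zero hx hodd fun i => (b i).re
  have im_bound := sum_pow_two_mul_le_of_odd_moments_eq_zero hx hodd fun i => (b i).im
  simp only [pow_mul _ 2 l] at re_bound im_bound
  have norm_sq (z : ℂ) : ‖z‖ ^ 2 = z.re ^ 2 + z.im ^ 2 := by
    rw [Complex.sq_norm, Complex.normSq_apply, sq, sq]
  simp only [pow_mul _ 2 l, norm_sq, Complex.re_sum, Complex.im_sum, Complex.re_ofReal_mul,
    Complex.im_ofReal_mul, sum_add_distrib]
  exact sum_add_pow_le_of_sum_pow_le (fun _ _ => sq_nonneg _) (fun _ _ => sq_nonneg _)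
    (by positivity) (by positivity) (by positivity) re_bound im_bound

end EvenMoments

section QuadraticSymbol

variable {F : Type*} [Field F]

lemma legSym_eq_zero_iff {P f : F[X]} : legSym P f = 0 ↔ P ∣ f := by
  unfold legSym
  split_ifs <;> simp_all

lemma abs_legSym_le_one (P f : F[X]) : |legSym P f| ≤ 1 := by
  unfold legSym
  split_ifs <;> simp

lemma legSym_congr {P Q f g : F[X]} (hdvd : P ∣ f ↔ Q ∣ g)
    (hres : (∃ r, P ∣ r * r - f) ↔ ∃ r, Q ∣ r * r - g) : legSym P f = legSym Q g := by
  unfold legSym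
  split_ifs <;> simp_all

lemma legSym_congr_of_dvd_sub {P f g : F[X]} (h : P ∣ f - g) : legSym P f = legSym P g := by
  refine legSym_congr (dvd_iff_dvd_of_dvd_sub h) (exists_congr fun r => dvd_iff_dvd_of_dvd_sub ?_)
  simpa only [sub_sub_sub_cancel_left] using dvd_sub_comm.1 h

lemma legSym_congr_of_associated {P Q : F[X]} (h : Associated P Q) (f : F[X]) :
    legSym P f = legSym Q f :=
  legSym_congr h.dvd_iff_dvd_left (exists_congr fun _ => h.dvd_iff_dvd_left)

lemma jacSym_eq_legSym {P : F[X]} (hP : Irreducible P) (f : F[X]) : jacSym f P = legSym P f := by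
  obtain ⟨Q, factors_eq⟩ := Multiset.card_eq_one.1 (card_factors_of_irreducible hP)
  have associated : Associated Q P := by simpa [factors_eq] using factors_prod hP.ne_zero
  simp [jacSym, factors_eq, legSym_congr_of_associated associated]

lemma legSym_one {P : F[X]} (hP : Irreducible P) : legSym P 1 = 1 := by
  have residue : ∃ r : F[X], P ∣ r * r - 1 := ⟨1, by simp⟩
  simp [legSym, hP.not_dvd_one, residue]

lemma legSym_eq_quadraticChar (P : F[X]) [Fact (Irreducible P)] [Fintype (AdjoinRoot P)]
    [DecidableEq (AdjoinRoot P)] (f : F[X]) :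
    legSym P f = quadraticChar (AdjoinRoot P) (AdjoinRoot.mk P f) := by
  have residue_iff : (∃ r, P ∣ r * r - f) ↔ IsSquare (AdjoinRoot.mk P f) := by
    simp only [← AdjoinRoot.mk_eq_mk, map_mul, IsSquare, AdjoinRoot.mk_surjective.exists, eq_comm]
  have dvd_iff : P ∣ f ↔ AdjoinRoot.mk P f = 0 := AdjoinRoot.mk_eq_zero.symm
  rw [quadraticChar_apply, quadraticCharFun, legSym]
  split_ifs <;> simp_all

variable [Finite F]

lemma finite_adjoinRoot {P : F[X]} (hP : P ≠ 0) : Finite (AdjoinRoot P) :=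
  have := (AdjoinRoot.powerBasis hP).finite
  Module.finite_of_finite F

lemma legSym_mul {P : F[X]} (hP : Irreducible P) (f g : F[X]) :
    legSym P (f * g) = legSym P f * legSym P g := by
  classical
  have := Fact.mk hP
  have := finite_adjoinRoot hP.ne_zero
  have := Fintype.ofFinite (AdjoinRoot P)
  simp only [legSym_eq_quadraticChar, map_mul]

lemma exists_legSym_eq_neg_one (hF : ringChar F ≠ 2) {P : F[X]} (hP : Irreducible P) :
    ∃ f, legSym P f = -1 := by
  classical
  have := Fact.mk hP
  have := finite_adjoinRoot hP.ne_zero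
  have := Fintype.ofFinite (AdjoinRoot P)
  rw [Algebra.ringChar_eq F (AdjoinRoot P)] at hF
  obtain ⟨r, hr⟩ := quadraticChar_exists_neg_one hF
  obtain ⟨f, rfl⟩ := AdjoinRoot.mk_surjective r
  exact ⟨f, by rw [legSym_eq_quadraticChar, hr]⟩

end QuadraticSymbol

section MonicPolynomials

variable {F : Type*} [Field F]

section Finite

variable (F) [Finite F]

lemma finite_setOf_monic_natDegree_eq (n : ℕ) :
    {D : F[X] | D.Monic ∧ D.natDegree = n}.Finite :=
  Finite.of_equiv _ ((monicEquivDegreeLT n).trans (degreeLTEquiv F n).toEquiv).symm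

/-- The monic polynomials of degree exactly `n`, as a finset: the range of `D` over which character
sums are taken (all of them, square-free or not). -/
noncomputable def monicOfDegree (n : ℕ) : Finset F[X] :=
  (finite_setOf_monic_natDegree_eq F n).toFinset

open Classical in
/-- The primes `P` of `F[X]`, normalised to be monic, of degree at most `h`, as a finset: the index
set of the inner sum. -/
noncomputable def monicIrreducibleOfDegreeLE (h : ℕ) : Finset F[X] :=
  {P ∈ (range (h + 1)).biUnion (monicOfDegree F) | Irreducible P}

end Finite

lemma mem_monicOfDegree [Finite F] {n : ℕ} {D : F[X]} :
    D ∈ monicOfDegree F n ↔ D.Monic ∧ D.natDegree = n := by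
  simp [monicOfDegree]

lemma mem_monicIrreducibleOfDegreeLE [Finite F] {h : ℕ} {P : F[X]} :
    P ∈ monicIrreducibleOfDegreeLE F h ↔ P.Monic ∧ Irreducible P ∧ P.natDegree ≤ h := by
  simp only [monicIrreducibleOfDegreeLE, mem_filter, mem_biUnion, mem_range, mem_monicOfDegree,
    Nat.lt_succ_iff]
  grind

lemma card_monicOfDegree [Fintype F] (n : ℕ) : #(monicOfDegree F n) = Fintype.card F ^ n := by
  have card_eq := Nat.card_congr ((monicEquivDegreeLT n).trans (degreeLTEquiv F n).toEquiv)
  rw [Nat.card_fun, Nat.card_fin, Nat.card_eq_fintype_card (α := F)] at card_eq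
  exact (Set.ncard_eq_toFinset_card _ (finite_setOf_monic_natDegree_eq F n)).symm.trans card_eq

lemma sum_monicOfDegree_mul_left [Finite F] {R : Type*} [AddCommMonoid R] {n : ℕ} {M u : F[X]}
    (hM : M.Monic) (hn : M.natDegree ≤ n) (hu : IsCoprime M u) {Φ : F[X] → R}
    (hΦ : ∀ D E, M ∣ D - E → Φ D = Φ E) :
    ∑ D ∈ monicOfDegree F n, Φ (u * D) = ∑ D ∈ monicOfDegree F n, Φ D := by
  -- Reducing only the part `(u - 1) * D` of `u * D` modulo `M` keeps the leading term of `D`.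
  let σ (D : F[X]) : F[X] := D + ((u - 1) * D) %ₘ M
  have dvd_sub_σ (D : F[X]) : M ∣ u * D - σ D :=
    ⟨((u - 1) * D) /ₘ M, by linear_combination -(modByMonic_add_div ((u - 1) * D) M)⟩
  have mapsTo : Set.MapsTo σ (monicOfDegree F n) (monicOfDegree F n) := by
    intro D hD
    obtain ⟨monic, rfl⟩ := mem_monicOfDegree.1 hD
    have degree_lt : (((u - 1) * D) %ₘ M).degree < D.degree :=
      (degree_modByMonic_lt _ hM).trans_le <| by
        rwa [degree_eq_natDegree hM.ne_zero, degree_eq_natDegree monic.ne_zero, Nat.cast_le]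
    exact mem_monicOfDegree.2 ⟨monic.add_of_left degree_lt,
      natDegree_add_eq_left_of_degree_lt degree_lt⟩
  have injOn : Set.InjOn σ (monicOfDegree F n) := by
    intro D _ E _ (h : σ D = σ E)
    have dvd_mul : M ∣ u * (D - E) := by
      have := dvd_sub (dvd_sub_σ D) (dvd_sub_σ E)
      rwa [h, sub_sub_sub_cancel_right, ← mul_sub] at this
    have mod_eq : ((u - 1) * D) %ₘ M = ((u - 1) * E) %ₘ M := by
      rw [← sub_eq_zero, ← sub_modByMonic, modByMonic_eq_zero_iff_dvd hM, ← mul_sub]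
      exact (hu.dvd_of_dvd_mul_left dvd_mul).mul_left _
    simpa [σ, mod_eq] using h
  exact sum_nbij σ mapsTo injOn (surjOn_of_injOn_of_card_le σ mapsTo injOn le_rfl)
    fun D _ => hΦ _ _ (dvd_sub_σ D)

lemma exists_forall_dvd_sub {R : Type*} [CommRing R] {s : Finset R}
    (hs : (s : Set R).Pairwise IsCoprime) (v : R → R) : ∃ u, ∀ P ∈ s, P ∣ u - v P := by
  have coprime : Pairwise (Function.onFun IsCoprime fun P : s => Ideal.span {P.1}) := fun P Q hPQ =>
    Ideal.isCoprime_span_singleton_iff _ _ |>.2 (hs P.2 Q.2 (Subtype.coe_ne_coe.2 hPQ))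
  obtain ⟨u, hu⟩ := Ideal.exists_forall_sub_mem_ideal coprime fun P => v P
  exact ⟨u, fun P hP => Ideal.mem_span_singleton.1 (hu ⟨P, hP⟩)⟩

lemma pairwise_isCoprime_of_monic_irreducible {s : Set F[X]}
    (hs : ∀ P ∈ s, P.Monic ∧ Irreducible P) : s.Pairwise IsCoprime := by
  intro P hP Q hQ hPQ
  obtain ⟨monic_P, irreducible_P⟩ := hs P hP
  obtain ⟨monic_Q, irreducible_Q⟩ := hs Q hQ
  rw [irreducible_P.coprime_iff_not_dvd]
  exact fun hdvd => hPQ <| eq_of_monic_of_associated monic_P monic_Q <|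
    irreducible_P.associated_of_dvd irreducible_Q hdvd

lemma exists_legSym_eq_ite [DecidableEq F[X]] [Finite F] (hF : ringChar F ≠ 2)
    {s : Finset F[X]} (hs : ∀ P ∈ s, P.Monic ∧ Irreducible P) {Q : F[X]} (hQ : Q ∈ s) :
    ∃ u, ∀ P ∈ s, legSym P u = if P = Q then -1 else 1 := by
  obtain ⟨v, hv⟩ := exists_legSym_eq_neg_one hF (hs Q hQ).2
  obtain ⟨u, hu⟩ := exists_forall_dvd_sub (pairwise_isCoprime_of_monic_irreducible hs)
    fun P => if P = Q then v else 1
  refine ⟨u, fun P hP => ?_⟩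
  rw [legSym_congr_of_dvd_sub (hu P hP)]
  split_ifs with h
  · rw [h, hv]
  · exact legSym_one (hs P hP).2

lemma prod_legSym_pow_congr {s : Finset F[X]} {k : F[X] → ℕ} {D E : F[X]}
    (h : ∏ P ∈ s, P ^ k P ∣ D - E) :
    ∏ P ∈ s, legSym P D ^ k P = ∏ P ∈ s, legSym P E ^ k P := by
  refine prod_congr rfl fun P hP => ?_
  rcases eq_or_ne (k P) 0 with hkP | hkP
  · simp only [hkP, pow_zero]
  · have dvd_modulus : P ∣ ∏ P ∈ s, P ^ k P := (dvd_pow_self P hkP).trans (dvd_prod_of_mem _ hP)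
    rw [legSym_congr_of_dvd_sub (dvd_modulus.trans h)]

lemma prod_legSym_mul_pow [Finite F] {s : Finset F[X]} (hs : ∀ P ∈ s, Irreducible P)
    (k : F[X] → ℕ) (f g : F[X]) :
    ∏ P ∈ s, legSym P (f * g) ^ k P =
      (∏ P ∈ s, legSym P f ^ k P) * ∏ P ∈ s, legSym P g ^ k P := by
  rw [← prod_mul_distrib]
  exact prod_congr rfl fun P hP => by rw [legSym_mul (hs P hP), mul_pow]

lemma sum_prod_legSym_pow_eq_zero [Finite F] (hF : ringChar F ≠ 2) {s : Finset F[X]}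
    (hs : ∀ P ∈ s, P.Monic ∧ Irreducible P) {n : ℕ} {k : F[X] → ℕ}
    (hk : ∑ P ∈ s, k P * P.natDegree ≤ n) (hodd : ∃ Q ∈ s, Odd (k Q)) :
    ∑ D ∈ monicOfDegree F n, ∏ P ∈ s, legSym P D ^ k P = 0 := by
  classical
  obtain ⟨Q, hQ, odd_k⟩ := hodd
  obtain ⟨u, legSym_u⟩ := exists_legSym_eq_ite hF hs hQ
  have monic : (∏ P ∈ s, P ^ k P).Monic := monic_prod_of_monic _ _ fun P hP => (hs P hP).1.pow _
  have natDegree_le : (∏ P ∈ s, P ^ k P).natDegree ≤ n := by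
    rw [natDegree_prod_of_monic _ _ fun P hP => (hs P hP).1.pow _]
    simpa only [natDegree_pow] using hk
  have coprime : IsCoprime (∏ P ∈ s, P ^ k P) u := by
    refine IsCoprime.prod_left fun P hP => IsCoprime.pow_left ?_
    rw [(hs P hP).2.coprime_iff_not_dvd, ← legSym_eq_zero_iff, legSym_u P hP]
    split_ifs <;> decide
  have prod_u : ∏ P ∈ s, legSym P u ^ k P = -1 := by
    rw [prod_eq_single_of_mem Q hQ fun P hP hPQ => by simp [legSym_u P hP, hPQ], legSym_u Q hQ,
      if_pos rfl, odd_k.neg_one_pow]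
  have sum_eq_neg : ∑ D ∈ monicOfDegree F n, ∏ P ∈ s, legSym P D ^ k P =
      -∑ D ∈ monicOfDegree F n, ∏ P ∈ s, legSym P D ^ k P := by
    rw [← sum_neg_distrib,
      ← sum_monicOfDegree_mul_left monic natDegree_le coprime fun _ _ => prod_legSym_pow_congr]
    exact sum_congr rfl fun D _ => by
      rw [prod_legSym_mul_pow fun P hP => (hs P hP).2, prod_u, neg_one_mul]
  exact self_eq_neg.1 sum_eq_neg

end MonicPolynomials

section MomentBound

variable {F : Type*} [Field F] [Fintype F]

lemma sum_norm_sum_legSym_pow_two_mul_le (hF : ringChar F ≠ 2) {n h l : ℕ} (hn : 2 * h * l ≤ n)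
    (b : F[X] → ℂ) :
    ∑ D ∈ monicOfDegree F n,
        ‖∑ P ∈ monicIrreducibleOfDegreeLE F h, (legSym P D : ℂ) * b P‖ ^ (2 * l) ≤
      (Fintype.card F : ℝ) ^ n * ((2 * l).factorial / (l.factorial * 2 ^ l)) *
        (∑ P ∈ monicIrreducibleOfDegreeLE F h, ‖b P‖ ^ 2) ^ l := by
  classical
  have odd_moment_eq_zero (k : F[X] → ℕ)
      (hk : k ∈ (monicIrreducibleOfDegreeLE F h).piAntidiag (2 * l))
      (hodd : ∃ P ∈ monicIrreducibleOfDegreeLE F h, Odd (k P)) :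
      ∑ D ∈ monicOfDegree F n,
        ∏ P ∈ monicIrreducibleOfDegreeLE F h, (legSym P D : ℝ) ^ k P = 0 := by
    have degree_le : ∑ P ∈ monicIrreducibleOfDegreeLE F h, k P * P.natDegree ≤ n :=
      calc ∑ P ∈ monicIrreducibleOfDegreeLE F h, k P * P.natDegree
          ≤ ∑ P ∈ monicIrreducibleOfDegreeLE F h, k P * h := by
            gcongr with P hP
            exact (mem_monicIrreducibleOfDegreeLE.1 hP).2.2
        _ = 2 * h * l := by rw [← sum_mul, (mem_piAntidiag.1 hk).1]; ring
        _ ≤ n := hn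
    exact_mod_cast sum_prod_legSym_pow_eq_zero hF
      (fun P hP => (mem_monicIrreducibleOfDegreeLE.1 hP).imp_right And.left) degree_le hodd
  have bound := sum_norm_pow_two_mul_le_of_odd_moments_eq_zero
    (fun D _ P _ => mod_cast abs_legSym_le_one P D) odd_moment_eq_zero b
  simpa only [card_monicOfDegree, Nat.cast_pow, Complex.ofReal_intCast] using bound

lemma tsum_subtype_eq_sum {α E : Type*} [AddCommMonoid E] [TopologicalSpace E] {p : α → Prop}
    {s : Finset α} (hs : ∀ x, x ∈ s ↔ p x) (f : α → E) :
    ∑' x : {x // p x}, f x = ∑ x ∈ s, f x := by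
  obtain rfl : (· ∈ s) = p := funext fun x => propext (hs x)
  exact s.tsum_subtype f

theorem char_sum_moment_bound_general (hF : ringChar F ≠ 2) {n h l : ℕ} (hn : 2 * h * l ≤ n)
    {p : F[X] → Prop} (hp : ∀ D, p D → D.Monic ∧ D.natDegree = n) (a : F[X] → ℂ) :
    ∑' D : {D // p D}, ‖∑' P : {P : F[X] // P.Monic ∧ Irreducible P ∧ P.natDegree ≤ h},
        (jacSym D.1 P.1 : ℂ) * a P / (√((Fintype.card F : ℝ) ^ P.1.natDegree) : ℂ)‖ ^ (2 * l) ≤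
      (Fintype.card F : ℝ) ^ n * ((2 * l).factorial / (l.factorial * 2 ^ l)) *
        (∑' P : {P : F[X] // P.Monic ∧ Irreducible P ∧ P.natDegree ≤ h},
          ‖a P‖ ^ 2 / (Fintype.card F : ℝ) ^ P.1.natDegree) ^ l := by
  classical
  let b (P : F[X]) : ℂ := a P / (√((Fintype.card F : ℝ) ^ P.natDegree) : ℂ)
  have norm_b_sq (P : F[X]) : ‖b P‖ ^ 2 = ‖a P‖ ^ 2 / (Fintype.card F : ℝ) ^ P.natDegree := by
    rw [norm_div, div_pow, Complex.norm_real, Real.norm_of_nonneg (Real.sqrt_nonneg _),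
      Real.sq_sqrt (by positivity)]
  have inner_sum (D : F[X]) :
      ∑' P : {P : F[X] // P.Monic ∧ Irreducible P ∧ P.natDegree ≤ h},
        (jacSym D P.1 : ℂ) * a P / (√((Fintype.card F : ℝ) ^ P.1.natDegree) : ℂ) =
      ∑ P ∈ monicIrreducibleOfDegreeLE F h, (legSym P D : ℂ) * b P := by
    rw [← tsum_subtype_eq_sum fun _ => mem_monicIrreducibleOfDegreeLE]
    exact tsum_congr fun P => by rw [jacSym_eq_legSym P.2.2.1, mul_div_assoc]
  have mem_filter_iff (D : F[X]) : D ∈ (monicOfDegree F n).filter p ↔ p D := by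
    rw [mem_filter, mem_monicOfDegree, and_iff_right_of_imp (hp D)]
  simp only [inner_sum, ← norm_b_sq]
  rw [tsum_subtype_eq_sum (fun _ => mem_monicIrreducibleOfDegreeLE) fun P => ‖b P‖ ^ 2,
    tsum_subtype_eq_sum mem_filter_iff
      fun D => ‖∑ P ∈ monicIrreducibleOfDegreeLE F h, (legSym P D : ℂ) * b P‖ ^ (2 * l)]
  exact (sum_le_sum_of_subset_of_nonneg (filter_subset p _)
    fun _ _ _ => by positivity).trans (sum_norm_sum_legSym_pow_two_mul_le hF hn b)

end MomentBound

/-- Chebyshev-type bound for character sums over square-free polynomials: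
for `2hl ≤ 2g+1` and arbitrary complex numbers `a(P)`,
`∑_{D ∈ H*_{2g+1}} |∑_{deg P ≤ h} χ_D(P) a(P)/|P|^{1/2}|^{2l}
  ≪ q^{2g} (2l)!/(l! 2^l) (∑_{deg P ≤ h} |a(P)|²/|P|)^l`
with an absolute implied constant. -/
theorem char_sum_moment_bound {F : Type*} [Field F] [Fintype F]
    (hq4 : Fintype.card F % 4 = 1) (Δ : Polynomial F) (hΔ : Δ ≠ 0) :
    ∃ C : ℝ, 0 < C ∧ ∀ (g h l : ℕ), 0 < h → 0 < l → 2 * h * l ≤ 2 * g + 1 →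
      ∀ a : Polynomial F → ℂ,
      (∑' D : {D : Polynomial F // D.Monic ∧ Squarefree (D : Polynomial F) ∧
          IsCoprime (D : Polynomial F) Δ ∧ (D : Polynomial F).natDegree = 2 * g + 1},
        ‖∑' P : {P : Polynomial F // P.Monic ∧ Irreducible (P : Polynomial F) ∧
            (P : Polynomial F).natDegree ≤ h},
          (jacSym (D : Polynomial F) (P : Polynomial F) : ℂ) * a (P : Polynomial F) /
            (Real.sqrt ((Fintype.card F : ℝ) ^ (P : Polynomial F).natDegree) : ℂ)‖ ^
          (2 * l)) ≤
      C * (Fintype.card F : ℝ) ^ (2 * g) *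
        ((Nat.factorial (2 * l) : ℝ) / (Nat.factorial l * 2 ^ l)) *
        (∑' P : {P : Polynomial F // P.Monic ∧ Irreducible (P : Polynomial F) ∧
            (P : Polynomial F).natDegree ≤ h},
          ‖a (P : Polynomial F)‖ ^ 2 /
            ((Fintype.card F : ℝ) ^ (P : Polynomial F).natDegree)) ^ l := by
  refine ⟨Fintype.card F, mod_cast Fintype.card_pos, fun g h l _ _ hn a => ?_⟩
  rw [← pow_succ']
  exact char_sum_moment_bound_general (mt FiniteField.even_card_iff_char_two.1 (by omega)) hn
    (fun D hD => ⟨hD.1, hD.2.2.2⟩) a
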